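/- arXiv:1310.1868 — 2 statements merged into one kernel-verified Lean document; each statement's English description precedes it below -/
import Mathlib

section
/- For every real number t and every r > 0, the function f(r) := arsinh(e^t · r) satisfies f''(r) + f'(r)/r = e^t / (r · (1 + e^{2t} r²)^{3/2}); equivalently, (e^{-2t} + r²) · (f''(r) + f'(r)/r) = 1/(e^{2t} r² √(1 + e^{-2t} r^{-2})). -/
open Real

/-!
The substitution `x = e^t r` reduces everything to `t = 0`: the radial Laplacian scales by `e^{2t}`,
which turns the conformal factor `e^{-2t} + r²` into `1 + x²`. There `arsinh' = 1 / w` and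
`arsinh'' = -x / w³` with `w = √(1 + x²)`, so the Laplacian of `arsinh` is
`(w² - x²) / (x w³) = 1 / (x w³)`, and the factor `1 + x² = w²` leaves `1 / (x w)`.
-/

/-- The Euclidean Laplacian on the plane in terms of the radial profile `f`: the value of `Δ F` at
distance `r` from the origin, where `F x = f ‖x‖`. Meaningful for `r > 0` only. -/
noncomputable def radialLaplacian (f : ℝ → ℝ) (r : ℝ) : ℝ :=
  deriv (deriv f) r + deriv f r / r

theorem radialLaplacian_comp_mul_left (f : ℝ → ℝ) {c : ℝ} (hc : c ≠ 0) (r : ℝ) :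
    radialLaplacian (fun s => f (c * s)) r = c ^ 2 * radialLaplacian f (c * r) := by
  have hderiv : deriv (fun s => f (c * s)) = fun s => c * deriv f (c * s) :=
    funext fun s => deriv_comp_mul_left c f s
  have hderiv2 : deriv (fun s => c * deriv f (c * s)) r = c * (c * deriv (deriv f) (c * r)) := by
    rw [deriv_const_mul_field, deriv_comp_mul_left, smul_eq_mul]
  simp only [radialLaplacian, hderiv, hderiv2]
  field_simp

theorem deriv_arsinh : deriv arsinh = fun x => (√(1 + x ^ 2))⁻¹ :=
  funext fun x => (hasDerivAt_arsinh x).deriv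

theorem deriv_deriv_arsinh (x : ℝ) : deriv (deriv arsinh) x = -x / √(1 + x ^ 2) ^ 3 := by
  have hpos : 0 < 1 + x ^ 2 := by positivity
  have hsq : HasDerivAt (fun y : ℝ => 1 + y ^ 2) (2 * x) x := by
    simpa using (hasDerivAt_pow 2 x).const_add 1
  rw [deriv_arsinh, ((hsq.sqrt hpos.ne').fun_inv (sqrt_ne_zero'.2 hpos)).deriv]
  field_simp

theorem radialLaplacian_arsinh {x : ℝ} (hx : x ≠ 0) :
    radialLaplacian arsinh x = 1 / (x * √(1 + x ^ 2) ^ 3) := by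
  have hw : √(1 + x ^ 2) ≠ 0 := sqrt_ne_zero'.2 (by positivity)
  have hw2 : √(1 + x ^ 2) ^ 2 = 1 + x ^ 2 := sq_sqrt (by positivity)
  rw [radialLaplacian, deriv_deriv_arsinh, deriv_arsinh]
  calc -x / √(1 + x ^ 2) ^ 3 + (√(1 + x ^ 2))⁻¹ / x
      = (√(1 + x ^ 2) ^ 2 - x ^ 2) / (x * √(1 + x ^ 2) ^ 3) := by
        field_simp
        ring
    _ = 1 / (x * √(1 + x ^ 2) ^ 3) := by rw [hw2, add_sub_cancel_right]

theorem one_add_sq_mul_radialLaplacian_arsinh {x : ℝ} (hx : x ≠ 0) :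
    (1 + x ^ 2) * radialLaplacian arsinh x = 1 / (x * √(1 + x ^ 2)) := by
  have hw : √(1 + x ^ 2) ≠ 0 := sqrt_ne_zero'.2 (by positivity)
  have hw2 : √(1 + x ^ 2) ^ 2 = 1 + x ^ 2 := sq_sqrt (by positivity)
  rw [radialLaplacian_arsinh hx]
  field_simp
  exact hw2.symm

theorem mul_sqrt_one_add_inv_sq {x : ℝ} (hx : 0 < x) : x * √(1 + x⁻¹ ^ 2) = √(1 + x ^ 2) := by
  calc x * √(1 + x⁻¹ ^ 2) = √(x ^ 2 * (1 + x⁻¹ ^ 2)) := by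
        rw [sqrt_mul (sq_nonneg x), sqrt_sq hx.le]
    _ = √(1 + x ^ 2) := by
        congr 1
        field_simp
        ring

theorem rpow_three_div_two {x : ℝ} (hx : 0 ≤ x) : x ^ ((3 : ℝ) / 2) = √x ^ 3 := by
  rw [rpow_div_two_eq_sqrt 3 hx, rpow_ofNat]

/-- Radial Laplacian computation for the distance function on Hamilton's cigar:
for `f(r) = arsinh (e^t r)` and `r > 0` one has
`f''(r) + f'(r)/r = e^t / (r (1 + e^{2t} r²)^{3/2})`, and equivalently
`(e^{-2t} + r²)(f''(r) + f'(r)/r) = 1 / (e^{2t} r² √(1 + e^{-2t} r^{-2}))`. -/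
theorem cigar_radial_laplacian (t : ℝ) (r : ℝ) (hr : 0 < r) :
    (deriv (deriv fun s : ℝ => Real.arsinh (Real.exp t * s)) r
        + deriv (fun s : ℝ => Real.arsinh (Real.exp t * s)) r / r
      = Real.exp t / (r * (1 + Real.exp (2 * t) * r ^ 2) ^ ((3 : ℝ) / 2)))
    ∧ (Real.exp (-2 * t) + r ^ 2) *
        (deriv (deriv fun s : ℝ => Real.arsinh (Real.exp t * s)) r
          + deriv (fun s : ℝ => Real.arsinh (Real.exp t * s)) r / r)
      = 1 / (Real.exp (2 * t) * r ^ 2 * Real.sqrt (1 + Real.exp (-2 * t) * r⁻¹ ^ 2)) := by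
  have hexp : exp (2 * t) = exp t ^ 2 := exp_nat_mul t 2
  have hexp_neg : exp (-2 * t) = (exp t ^ 2)⁻¹ := by rw [neg_mul, exp_neg, hexp]
  have hx : 0 < exp t * r := by positivity
  have hscale := radialLaplacian_comp_mul_left arsinh (exp_ne_zero t) r
  change radialLaplacian (fun s => arsinh (exp t * s)) r = _ ∧
    _ * radialLaplacian (fun s => arsinh (exp t * s)) r = _
  rw [hscale, hexp, hexp_neg, ← mul_pow, ← inv_pow, ← mul_pow, ← mul_inv]
  constructor
  · rw [radialLaplacian_arsinh hx.ne', rpow_three_div_two (by positivity)]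
    field_simp
  · calc ((exp t)⁻¹ ^ 2 + r ^ 2) * (exp t ^ 2 * radialLaplacian arsinh (exp t * r))
        = (1 + (exp t * r) ^ 2) * radialLaplacian arsinh (exp t * r) := by field_simp
      _ = 1 / (exp t * r * √(1 + (exp t * r) ^ 2)) :=
        one_add_sq_mul_radialLaplacian_arsinh hx.ne'
      _ = 1 / ((exp t * r) ^ 2 * √(1 + (exp t * r)⁻¹ ^ 2)) := by
        rw [← mul_sqrt_one_add_inv_sq hx, ← mul_assoc, ← sq]
end

section
/- Let ρ(t,x) := arsinh(e^t |x|) for t ∈ ℝ and x ∈ ℝ² \ {0}. Then for every t ∈ ℝ and every x ≠ 0, one has ∂ρ/∂t(t,x) + ½ (e^{-2t} + |x|²) Δ_eucl ρ(t, ·)(x) > 1; moreover, for each fixed t this quantity is a strictly decreasing function of |x| whose limit as |x| → ∞ equals 1. -/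
/-!
Away from the origin of `ℝⁿ`, a radial function `f(|x|)` has Laplacian `f'' + (n - 1) f' / r`.
For `ρ = arsinh (e^t r)` in the plane, together with `e^{-2t} + r² = (e^{-t} cosh ρ)²`, this gives
`Δ_{g(t)} ρ = coth ρ - tanh ρ`, while `∂ρ/∂t = tanh ρ`. The drift is therefore
`½ (tanh ρ + coth ρ) = coth (2ρ) = 1 + 2 / (e^{4ρ} - 1)`, which decreases strictly to `1` as `ρ`,
equivalently `|x|`, increases to infinity.
-/

open Filter

/-- The Euclidean Laplacian of a real-valued function on `ℝ²`, defined as the sum of the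
second directional derivatives along the standard orthonormal basis. -/
noncomputable def euclLaplacian (F : EuclideanSpace ℝ (Fin 2) → ℝ)
    (x : EuclideanSpace ℝ (Fin 2)) : ℝ :=
  ∑ i : Fin 2,
    fderiv ℝ (fun y => fderiv ℝ F y (EuclideanSpace.single i (1 : ℝ))) x
      (EuclideanSpace.single i (1 : ℝ))

/-- The parabolic radial drift of Brownian motion on Hamilton's cigar.  With
`ρ(t,x) = arsinh (e^t |x|)` the distance from the origin for the metric
`g(t) = (e^{-2t} + |x|²)^{-1} g_eucl` (whose Laplace–Beltrami operator is
`Δ_{g(t)} = (e^{-2t} + |x|²) Δ_eucl`), this is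
`∂ρ/∂t (t,x) + ½ (e^{-2t} + |x|²) Δ_eucl ρ(t,·)(x)`. -/
noncomputable def cigarDrift (t : ℝ) (x : EuclideanSpace ℝ (Fin 2)) : ℝ :=
  deriv (fun s : ℝ => Real.arsinh (Real.exp s * ‖x‖)) t
    + (1 / 2) * (Real.exp (-2 * t) + ‖x‖ ^ 2) *
        euclLaplacian (fun y => Real.arsinh (Real.exp t * ‖y‖)) x

section RadialLaplacian

open scoped Topology InnerProductSpace Laplacian

variable {E : Type*} [NormedAddCommGroup E] [InnerProductSpace ℝ E] {x : E}

theorem hasFDerivAt_norm_of_ne_zero (hx : x ≠ 0) :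
    HasFDerivAt (fun y : E => ‖y‖) (‖x‖⁻¹ • innerSL ℝ x) x := by
  have hx' : ‖x‖ ^ 2 ≠ 0 := pow_ne_zero 2 (norm_ne_zero_iff.2 hx)
  have hsqrt := (hasStrictFDerivAt_norm_sq x).hasFDerivAt.sqrt hx'
  simp only [Real.sqrt_sq (norm_nonneg _)] at hsqrt
  convert hsqrt using 1
  ext v
  simp only [smul_apply, smul_eq_mul, nsmul_eq_mul]
  ring

theorem hasFDerivAt_comp_norm {f : ℝ → ℝ} {f' : ℝ} (hx : x ≠ 0) (hf : HasDerivAt f f' ‖x‖) :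
    HasFDerivAt (fun y : E => f ‖y‖) ((f' / ‖x‖) • innerSL ℝ x) x := by
  simpa only [smul_smul, div_eq_mul_inv, Function.comp_def] using
    hf.comp_hasFDerivAt x (hasFDerivAt_norm_of_ne_zero hx)

variable {f f' : ℝ → ℝ} {f'' : ℝ}

theorem fderiv_comp_norm_eventuallyEq (hx : x ≠ 0)
    (hf : ∀ᶠ r in 𝓝 ‖x‖, HasDerivAt f (f' r) r) :
    (fderiv ℝ fun y : E => f ‖y‖) =ᶠ[𝓝 x] fun y => (f' ‖y‖ / ‖y‖) • innerSL ℝ y := by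
  filter_upwards [continuous_norm.continuousAt.eventually hf, eventually_ne_nhds hx] with y hfy hy
  exact (hasFDerivAt_comp_norm hy hfy).fderiv

theorem differentiableAt_fderiv_comp_norm (hx : x ≠ 0)
    (hf : ∀ᶠ r in 𝓝 ‖x‖, HasDerivAt f (f' r) r) (hf' : DifferentiableAt ℝ f' ‖x‖) :
    DifferentiableAt ℝ (fderiv ℝ fun y : E => f ‖y‖) x := by
  have hnorm := (hasFDerivAt_norm_of_ne_zero hx).differentiableAt
  have hquot : DifferentiableAt ℝ (fun y : E => f' ‖y‖ / ‖y‖) x :=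
    (hf'.fun_div differentiableAt_id (norm_ne_zero_iff.2 hx)).fun_comp' x hnorm
  exact (hquot.fun_smul (innerSL ℝ).differentiableAt).congr_of_eventuallyEq
    (fderiv_comp_norm_eventuallyEq hx hf)

theorem fderiv_fderiv_comp_norm_apply (hx : x ≠ 0)
    (hf : ∀ᶠ r in 𝓝 ‖x‖, HasDerivAt f (f' r) r) (hf' : HasDerivAt f' f'' ‖x‖) (v w : E) :
    fderiv ℝ (fderiv ℝ fun y : E => f ‖y‖) x v w =
      f' ‖x‖ / ‖x‖ * ⟪v, w⟫_ℝ + (f'' * ‖x‖ - f' ‖x‖) / ‖x‖ ^ 3 * (⟪x, v⟫_ℝ * ⟪x, w⟫_ℝ) := by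
  have hquot : HasDerivAt (fun r => f' r / r) ((f'' * ‖x‖ - f' ‖x‖) / ‖x‖ ^ 2) ‖x‖ := by
    simpa only [mul_one] using hf'.fun_div (hasDerivAt_id' ‖x‖) (norm_ne_zero_iff.2 hx)
  rw [(fderiv_comp_norm_eventuallyEq hx hf).fderiv_eq,
    ((hasFDerivAt_comp_norm hx hquot).fun_smul (innerSL ℝ).hasFDerivAt).fderiv]
  -- The `simp` lemmas for `innerSL ℝ`, which is declared conjugate-linear, do not fire here.
  change f' ‖x‖ / ‖x‖ * ⟪v, w⟫_ℝ +
    (f'' * ‖x‖ - f' ‖x‖) / ‖x‖ ^ 2 / ‖x‖ * ⟪x, v⟫_ℝ * ⟪x, w⟫_ℝ = _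
  ring

theorem laplacian_comp_norm [FiniteDimensional ℝ E] (hx : x ≠ 0)
    (hf : ∀ᶠ r in 𝓝 ‖x‖, HasDerivAt f (f' r) r) (hf' : HasDerivAt f' f'' ‖x‖) :
    Δ (fun y : E => f ‖y‖) x = f'' + (Module.finrank ℝ E - 1) * (f' ‖x‖ / ‖x‖) := by
  have hx' : ‖x‖ ≠ 0 := norm_ne_zero_iff.2 hx
  let b := stdOrthonormalBasis ℝ E
  calc
    Δ (fun y : E => f ‖y‖) x
      = ∑ i, (f' ‖x‖ / ‖x‖ + (f'' * ‖x‖ - f' ‖x‖) / ‖x‖ ^ 3 * ⟪x, b i⟫_ℝ ^ 2) := by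
        rw [InnerProductSpace.laplacian_eq_iteratedFDeriv_orthonormalBasis _ b]
        refine Finset.sum_congr rfl fun i _ => ?_
        rw [iteratedFDeriv_two_apply, fderiv_fderiv_comp_norm_apply hx hf hf']
        simp only [Matrix.cons_val_zero, Matrix.cons_val_one, real_inner_self_eq_norm_sq,
          b.norm_eq_one]
        ring
    _ = Module.finrank ℝ E * (f' ‖x‖ / ‖x‖) + (f'' * ‖x‖ - f' ‖x‖) / ‖x‖ ^ 3 * ‖x‖ ^ 2 := by
        rw [Finset.sum_add_distrib, ← Finset.mul_sum, b.sum_sq_inner_left]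
        simp
    _ = f'' + (Module.finrank ℝ E - 1) * (f' ‖x‖ / ‖x‖) := by
        field_simp
        ring

theorem euclLaplacian_eq_laplacian {F : EuclideanSpace ℝ (Fin 2) → ℝ}
    {x : EuclideanSpace ℝ (Fin 2)} (hF : DifferentiableAt ℝ (fderiv ℝ F) x) :
    euclLaplacian F x = Δ F x := by
  rw [InnerProductSpace.laplacian_eq_iteratedFDeriv_orthonormalBasis F
    (EuclideanSpace.basisFun (Fin 2) ℝ)]
  refine Finset.sum_congr rfl fun i _ => ?_
  rw [fderiv_clm_apply hF (differentiableAt_const _), iteratedFDeriv_two_apply]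
  simp

theorem euclLaplacian_comp_norm {x : EuclideanSpace ℝ (Fin 2)} (hx : x ≠ 0)
    (hf : ∀ᶠ r in 𝓝 ‖x‖, HasDerivAt f (f' r) r) (hf' : HasDerivAt f' f'' ‖x‖) :
    euclLaplacian (fun y => f ‖y‖) x = f'' + f' ‖x‖ / ‖x‖ := by
  rw [euclLaplacian_eq_laplacian (differentiableAt_fderiv_comp_norm hx hf hf'.differentiableAt),
    laplacian_comp_norm hx hf hf', finrank_euclideanSpace_fin]
  norm_num

end RadialLaplacian

section HyperbolicCotangent

open Real

theorem tanh_add_inv_tanh (x : ℝ) : tanh x + (tanh x)⁻¹ = 2 * (tanh (2 * x))⁻¹ := by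
  rcases eq_or_ne x 0 with rfl | hx
  · simp
  have hsinh : sinh x ≠ 0 := sinh_ne_zero.2 hx
  have hcosh : cosh x ≠ 0 := (cosh_pos x).ne'
  rw [tanh_eq_sinh_div_cosh, tanh_eq_sinh_div_cosh, sinh_two_mul, cosh_two_mul]
  field_simp
  ring

theorem inv_tanh_eq_one_add {x : ℝ} (hx : x ≠ 0) : (tanh x)⁻¹ = 1 + 2 / (exp (2 * x) - 1) := by
  have hexp : exp x ^ 2 - 1 ≠ 0 := by
    rw [← exp_nat_mul, sub_ne_zero, Ne, exp_eq_one_iff]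
    simpa using hx
  rw [tanh_eq, exp_neg, two_mul, exp_add, ← sq]
  field_simp
  ring

theorem one_lt_inv_tanh {x : ℝ} (hx : 0 < x) : 1 < (tanh x)⁻¹ := by
  have hexp : 0 < exp (2 * x) - 1 := by simpa using hx
  rw [inv_tanh_eq_one_add hx.ne', lt_add_iff_pos_right]
  positivity

theorem strictAntiOn_inv_tanh : StrictAntiOn (fun x => (tanh x)⁻¹) (Set.Ioi 0) := by
  intro x (hx : 0 < x) y (hy : 0 < y) hxy
  have hexp : 0 < exp (2 * x) - 1 := by simpa using hx
  simp only [inv_tanh_eq_one_add hx.ne', inv_tanh_eq_one_add hy.ne']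
  gcongr

theorem tendsto_inv_tanh_atTop : Tendsto (fun x => (tanh x)⁻¹) atTop (nhds 1) := by
  have hexp : Tendsto (fun x => exp (2 * x) - 1) atTop atTop :=
    tendsto_atTop_add_const_right _ _
      (tendsto_exp_atTop.comp (tendsto_id.const_mul_atTop two_pos))
  have hlim : Tendsto (fun x => 1 + 2 / (exp (2 * x) - 1)) atTop (nhds 1) := by
    simpa only [add_zero] using (hexp.const_div_atTop 2).const_add 1
  refine hlim.congr' ?_
  filter_upwards [eventually_ne_atTop 0] with x hx
  exact (inv_tanh_eq_one_add hx).symm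

end HyperbolicCotangent

section Cigar

open Real

/-- The distance from the origin for the cigar metric `g(t)`, as a function of the Euclidean
radius `r = |x|`. -/
noncomputable def cigarDist (t r : ℝ) : ℝ := arsinh (exp t * r)

theorem sinh_cigarDist (t r : ℝ) : sinh (cigarDist t r) = exp t * r := sinh_arsinh _

theorem cigarDist_pos {t r : ℝ} (hr : 0 < r) : 0 < cigarDist t r :=
  arsinh_pos_iff.2 (by positivity)

theorem strictMono_cigarDist (t : ℝ) : StrictMono (cigarDist t) :=
  arsinh_strictMono.comp (strictMono_mul_left_of_pos (exp_pos t))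

theorem tendsto_cigarDist_atTop (t : ℝ) : Tendsto (cigarDist t) atTop atTop :=
  sinhOrderIso.symm.tendsto_atTop.comp (tendsto_id.const_mul_atTop (exp_pos t))

theorem hasDerivAt_cigarDist_time (t r : ℝ) :
    HasDerivAt (fun s => cigarDist s r) (tanh (cigarDist t r)) t := by
  refine ((hasDerivAt_exp t).mul_const r).arsinh.congr_deriv ?_
  rw [cigarDist, tanh_arsinh, smul_eq_mul, div_eq_inv_mul]

theorem hasDerivAt_cigarDist (t r : ℝ) :
    HasDerivAt (cigarDist t) (exp t / cosh (cigarDist t r)) r := by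
  refine ((hasDerivAt_id' r).const_mul (exp t)).arsinh.congr_deriv ?_
  rw [cigarDist, cosh_arsinh, smul_eq_mul, mul_one, div_eq_inv_mul]

theorem hasDerivAt_deriv_cigarDist (t r : ℝ) :
    HasDerivAt (fun q => exp t / cosh (cigarDist t q))
      (-(exp t ^ 2 * sinh (cigarDist t r) / cosh (cigarDist t r) ^ 3)) r := by
  have hcosh : cosh (cigarDist t r) ≠ 0 := (cosh_pos _).ne'
  refine ((hasDerivAt_const r (exp t)).fun_div (hasDerivAt_cigarDist t r).cosh hcosh).congr_deriv ?_
  field_simp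
  ring

theorem exp_neg_two_mul_add_sq (t r : ℝ) :
    exp (-2 * t) + r ^ 2 = (cosh (cigarDist t r) / exp t) ^ 2 := by
  have hexp : exp (-2 * t) = (exp t ^ 2)⁻¹ := by
    rw [← exp_nat_mul, ← exp_neg]
    simp
  rw [div_pow, cosh_sq, sinh_cigarDist, hexp]
  field_simp
  ring

theorem mul_euclLaplacian_cigarDist (t : ℝ) {x : EuclideanSpace ℝ (Fin 2)} (hx : x ≠ 0) :
    (exp (-2 * t) + ‖x‖ ^ 2) * euclLaplacian (fun y => cigarDist t ‖y‖) x
      = (tanh (cigarDist t ‖x‖))⁻¹ - tanh (cigarDist t ‖x‖) := by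
  have hcosh : cosh (cigarDist t ‖x‖) ≠ 0 := (cosh_pos _).ne'
  have hsinh : sinh (cigarDist t ‖x‖) ≠ 0 :=
    (sinh_pos_iff.2 (cigarDist_pos (norm_pos_iff.2 hx))).ne'
  have hnorm : ‖x‖ = sinh (cigarDist t ‖x‖) / exp t := by
    rw [sinh_cigarDist, mul_div_cancel_left₀ _ (exp_ne_zero t)]
  rw [exp_neg_two_mul_add_sq, euclLaplacian_comp_norm hx
    (Eventually.of_forall (hasDerivAt_cigarDist t)) (hasDerivAt_deriv_cigarDist t ‖x‖),
    tanh_eq_sinh_div_cosh]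
  generalize cigarDist t ‖x‖ = ρ at *
  rw [hnorm]
  field_simp
  ring

theorem cigarDrift_eq_inv_tanh (t : ℝ) {x : EuclideanSpace ℝ (Fin 2)} (hx : x ≠ 0) :
    cigarDrift t x = (tanh (2 * cigarDist t ‖x‖))⁻¹ := by
  calc
    cigarDrift t x
      = deriv (fun s => cigarDist s ‖x‖) t
          + 1 / 2 * (exp (-2 * t) + ‖x‖ ^ 2) * euclLaplacian (fun y => cigarDist t ‖y‖) x := rfl
    _ = tanh (cigarDist t ‖x‖) + 1 / 2 * ((tanh (cigarDist t ‖x‖))⁻¹ - tanh (cigarDist t ‖x‖)) := by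
        rw [(hasDerivAt_cigarDist_time t ‖x‖).deriv, mul_assoc, mul_euclLaplacian_cigarDist t hx]
    _ = (tanh (cigarDist t ‖x‖) + (tanh (cigarDist t ‖x‖))⁻¹) / 2 := by ring
    _ = (tanh (2 * cigarDist t ‖x‖))⁻¹ := by
        rw [tanh_add_inv_tanh, mul_div_cancel_left₀ _ two_ne_zero]

theorem one_lt_cigarDrift (t : ℝ) {x : EuclideanSpace ℝ (Fin 2)} (hx : x ≠ 0) :
    1 < cigarDrift t x := by
  rw [cigarDrift_eq_inv_tanh t hx]
  exact one_lt_inv_tanh (mul_pos two_pos (cigarDist_pos (norm_pos_iff.2 hx)))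

theorem cigarDrift_lt_cigarDrift (t : ℝ) {x y : EuclideanSpace ℝ (Fin 2)} (hx : x ≠ 0)
    (hxy : ‖x‖ < ‖y‖) : cigarDrift t y < cigarDrift t x := by
  have hx' : 0 < ‖x‖ := norm_pos_iff.2 hx
  have hy' : 0 < ‖y‖ := hx'.trans hxy
  rw [cigarDrift_eq_inv_tanh t hx, cigarDrift_eq_inv_tanh t (norm_pos_iff.1 hy')]
  exact strictAntiOn_inv_tanh (mul_pos two_pos (cigarDist_pos hx'))
    (mul_pos two_pos (cigarDist_pos hy'))
    (mul_lt_mul_of_pos_left (strictMono_cigarDist t hxy) two_pos)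

theorem tendsto_cigarDrift_cobounded (t : ℝ) :
    Tendsto (cigarDrift t) (Bornology.cobounded (EuclideanSpace ℝ (Fin 2))) (nhds 1) := by
  have hdist : Tendsto (fun x : EuclideanSpace ℝ (Fin 2) => 2 * cigarDist t ‖x‖)
      (Bornology.cobounded _) atTop :=
    ((tendsto_cigarDist_atTop t).comp tendsto_norm_cobounded_atTop).const_mul_atTop two_pos
  refine (tendsto_inv_tanh_atTop.comp hdist).congr' ?_
  filter_upwards [Bornology.eventually_ne_cobounded 0] with x hx
  exact (cigarDrift_eq_inv_tanh t hx).symm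

end Cigar

/-- On Hamilton's cigar the parabolic radial drift
`∂ρ/∂t + ½ Δ_{g(t)} ρ` of Brownian motion is `> 1` at every `x ≠ 0`; for each fixed `t`
it is a strictly decreasing function of `|x|`, and it tends to `1` as `|x| → ∞`. -/
theorem cigar_drift_bounds :
    (∀ (t : ℝ) (x : EuclideanSpace ℝ (Fin 2)), x ≠ 0 → 1 < cigarDrift t x)
    ∧ (∀ (t : ℝ) (x y : EuclideanSpace ℝ (Fin 2)), x ≠ 0 → y ≠ 0 → ‖x‖ < ‖y‖ →
        cigarDrift t y < cigarDrift t x)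
    ∧ (∀ (t : ℝ) (v : EuclideanSpace ℝ (Fin 2)), ‖v‖ = 1 →
        Tendsto (fun r : ℝ => cigarDrift t (r • v)) atTop (nhds 1)) := by
  refine ⟨fun t x hx => one_lt_cigarDrift t hx,
    fun t x y hx _ hxy => cigarDrift_lt_cigarDrift t hx hxy, fun t v hv => ?_⟩
  have hray : Tendsto (fun r : ℝ => r • v) atTop (Bornology.cobounded _) := by
    rw [← tendsto_norm_atTop_iff_cobounded]
    simpa only [norm_smul, hv, mul_one] using tendsto_norm_atTop_atTop
  exact (tendsto_cigarDrift_cobounded t).comp hray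
end
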